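/- Proposition 7.2: The family $\{b_x : x\in W,\ \ell(s_0x)>\ell(x)\}$ spans $\mathcal{A}_{0+}$ as a complex vector space. In particular, for every integer $n\ge0$, the $\mathbb{C}$-subspace of $\mathcal{A}_{0+}$ spanned by $1$ together with all products of at most $n$ of the generators $\alpha_{ij}$ has dimension at most $\#\{x\in W : \ell(x)\le n,\ \ell(s_0x)>\ell(x)\}$ (so the Hilbert series of $\mathcal{A}_{0+}$ is dominated coefficientwise by $h_M(z)/(1+z)$, where $h_M(z)=\sum_{x\in W}z^{\ell(x)}$ is the growth series of $W$). -/

import Mathlib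

/-!
Extend the generators by `α_{ii} = 0` and attach to every word `ω = i₁ ⋯ i_n` and every starting
index `k` the chain `b_k(ω) = α_{k i₁} α_{i₁ i₂} ⋯ α_{i_{n-1} i_n}`. Since
`α_{ij} P = α_{kj} P - α_{ki} P`, the chains `b_o(ω)` with `ω` of length `n` span all products of
`n` generators (`prod_mem_span_bProd`).

A braid move only changes the chain by a sign: the two sides differ by multiples of
`α_{ij}^{m_{ij}} = 0` (`exists_bProd_braid`). By Matsumoto's theorem (`matsumoto`), `b_k(ω)` for
reduced `ω` therefore depends, up to a scalar, only on the element that `ω` represents. If `s_i`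
shortens that element, a reduced word for it can be taken to start with `i`, so `b_i(ω)` contains
the factor `α_{ii} = 0` (`bProd_eq_zero_of_descent`). This kills the chains of non-reduced words
as well as the `b_o(ω)` with `ℓ(s_o π(ω)) < ℓ(π(ω))`, and only multiples of the `b_x` remain.

Matsumoto's theorem rests on the exchange property (`mem_leftInvSeq`), obtained from the action of
`W` on `W × ℤ/2` that counts inversions modulo two, and on the fact that `s_i s_j` has order no
smaller than `m_{ij}` (`simple_mul_simple_pow_ne_one`), obtained from the geometric representation
and Mathlib's formulas for powers of a product of two reflections.
-/

/-!
Proposition 7.2. Let `M` be a Coxeter matrix on a finite set `I` (Mathlib convention: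
`M i j = 0` encodes `m_{ij} = ∞`), `cs : CoxeterSystem M W`, and let `𝒜_{0+}` be the
quotient of the free `ℂ`-algebra on generators `α_{ij}` (`i ≠ j`) by the relations
`α_{ij} + α_{ji} = 0`, `α_{ij} + α_{jk} + α_{ki} = 0` and `α_{ij}^{m_{ij}} = 0`
(`m_{ij} < ∞`). Fix `o ∈ I` and, for each `x ∈ W`, a reduced word `w x`; for `x` with
`ℓ(s_o x) > ℓ(x)` put `b_x = α_{o,i₁}α_{i₁i₂}⋯α_{i_{n-1}i_n}`. Then the `b_x` span
`𝒜_{0+}`; in particular the span of `1` and all products of at most `n` generators has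
dimension at most `#{x ∈ W : ℓ(x) ≤ n, ℓ(s_o x) > ℓ(x)}` (so the Hilbert series of
`𝒜_{0+}` is dominated by `h_M(z)/(1+z)`).
-/

noncomputable section

namespace EvenAdd

variable {I : Type*} [DecidableEq I]

/-- Index type for the generators `α_{ij}`, `i ≠ j`. -/
abbrev Gens (I : Type*) := {p : I × I // p.1 ≠ p.2}

/-- The generator `α_{ij}` of the free algebra. -/
def agen (i j : I) (h : i ≠ j) : FreeAlgebra ℂ (Gens I) := FreeAlgebra.ι ℂ ⟨(i, j), h⟩

/-- The defining relations of `𝒜_{0+}`: `α_{ij} + α_{ji} = 0`,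
`α_{ij} + α_{jk} + α_{ki} = 0`, and `α_{ij}^{m_{ij}} = 0` when `m_{ij} < ∞`. -/
inductive Rel (M : CoxeterMatrix I) :
    FreeAlgebra ℂ (Gens I) → FreeAlgebra ℂ (Gens I) → Prop
  | anti (i j : I) (h : i ≠ j) : Rel M (agen i j h + agen j i h.symm) 0
  | triangle (i j k : I) (hij : i ≠ j) (hjk : j ≠ k) (hki : k ≠ i) :
      Rel M (agen i j hij + agen j k hjk + agen k i hki) 0
  | nil (i j : I) (h : i ≠ j) (hm : M i j ≠ 0) : Rel M (agen i j h ^ (M i j)) 0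

/-- The algebra `𝒜_{0+}`. -/
abbrev A0 (M : CoxeterMatrix I) : Type _ := RingQuot (Rel M)

/-- The quotient map. -/
def mk (M : CoxeterMatrix I) : FreeAlgebra ℂ (Gens I) →ₐ[ℂ] A0 M :=
  RingQuot.mkAlgHom ℂ _

/-- Given a starting index `prev` and a list `[i₁, …, i_n]`, the product
`α_{prev,i₁} α_{i₁i₂} ⋯ α_{i_{n-1}i_n}` (junk value `0` if two consecutive indices coincide,
which does not occur for reduced words). -/
def bProd (M : CoxeterMatrix I) : I → List I → A0 M
  | _, [] => 1
  | prev, i :: rest =>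
      (if h : prev ≠ i then mk M (agen prev i h) else 0) * bProd M i rest

/-- The span of `1` and all products of at most `n` generators `α_{ij}` in `𝒜_{0+}`:
the `n`-th piece of the degree filtration. -/
def filtration (M : CoxeterMatrix I) (n : ℕ) : Submodule ℂ (A0 M) :=
  Submodule.span ℂ
    {z : A0 M | ∃ l : List (Gens I), l.length ≤ n ∧
      z = (l.map fun g => mk M (FreeAlgebra.ι ℂ g)).prod}

end EvenAdd

namespace EvenAdd

/-! ### The order of a product of two simple reflections -/

section Order

open Polynomial.Chebyshev Module

variable {I : Type*}

/-- The simple coroot `α_i^∨ = 2B(e_i, ·)` on `ℝ^(I)`, with `2B(e_i, e_j) = -2 cos (π / m_{ij})`.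
The junk value `π / 0 = 0` gives `-2`, the usual convention for `m_{ij} = ∞`. -/
def coroot (M : CoxeterMatrix I) (i : I) : Dual ℝ (I →₀ ℝ) :=
  Finsupp.linearCombination ℝ (fun j => -2 * Real.cos (Real.pi / M i j))

lemma coroot_single (M : CoxeterMatrix I) (i j : I) :
    coroot M i (Finsupp.single j 1) = -2 * Real.cos (Real.pi / M i j) := by
  simp [coroot]

lemma coroot_self (M : CoxeterMatrix I) (i : I) : coroot M i (Finsupp.single i 1) = 2 := by
  simp [coroot_single]

/-- The simple reflection `v ↦ v - 2B(e_i, v) e_i` of the geometric representation. -/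
def geomRefl (M : CoxeterMatrix I) (i : I) : (I →₀ ℝ) ≃ₗ[ℝ] (I →₀ ℝ) :=
  reflection (coroot_self M i)

lemma eval_param (m : ℕ) :
    (-2 * Real.cos (Real.pi / m)) * (-2 * Real.cos (Real.pi / m)) - 2
      = 2 * Real.cos (2 * (Real.pi / m)) := by
  rw [Real.cos_two_mul]; ring

lemma sin_two_pi_div_pos {m : ℕ} (hm : 3 ≤ m) : 0 < Real.sin (2 * (Real.pi / m)) := by
  have hm' : (3 : ℝ) ≤ m := by exact_mod_cast hm
  apply Real.sin_pos_of_pos_of_lt_pi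
  · positivity
  · rw [← mul_div_assoc, div_lt_iff₀ (by linarith)]
    nlinarith [Real.pi_pos]

/-- The two coefficients in Mathlib's formula for `(r_i r_j)^m` vanish when the two reflections
span an angle `π / m`. -/
lemma chebyshev_vanish {m : ℕ} (hm : 3 ≤ m) :
    let t := 2 * Real.cos (2 * (Real.pi / m))
    (S ℝ (((m : ℤ) - 2) / 2)).eval t *
      ((S ℝ (((m : ℤ) - 1) / 2)).eval t + (S ℝ (((m : ℤ) - 3) / 2)).eval t) = 0 ∧
    (S ℝ (((m : ℤ) - 1) / 2)).eval t *
      ((S ℝ ((m : ℤ) / 2)).eval t + (S ℝ (((m : ℤ) - 2) / 2)).eval t) = 0 := by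
  intro t
  have hs := (sin_two_pi_div_pos hm).ne'
  have hS (n : ℤ) : (S ℝ n).eval t * Real.sin (2 * (Real.pi / m))
      = Real.sin ((n + 1) * (2 * (Real.pi / m))) := S_two_mul_real_cos _ n
  have hm0 : (m : ℝ) ≠ 0 := by positivity
  rcases Nat.even_or_odd' m with ⟨h, rfl | rfl⟩
  · -- here `S_{h-1}` is a multiple of `sin (h · 2π/2h) = 0`
    have h1 : (S ℝ ((h : ℤ) - 1)).eval t = 0 := by
      have := hS (h - 1)
      rw [show (((h - 1 : ℤ) : ℝ) + 1) * (2 * (Real.pi / (2 * h : ℕ))) = Real.pi by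
        have hh : (h : ℝ) ≠ 0 := by
          intro h0
          simp [h0] at hm0
        push_cast; rw [sub_add_cancel]; field_simp, Real.sin_pi] at this
      exact (mul_eq_zero.mp this).resolve_right hs
    rw [show ((2 * h : ℕ) - 2 : ℤ) / 2 = h - 1 by lia,
      show ((2 * h : ℕ) - 1 : ℤ) / 2 = h - 1 by lia, h1]
    simp
  · have h1 : (S ℝ (h : ℤ)).eval t + (S ℝ ((h : ℤ) - 1)).eval t = 0 := by
      have e1 := hS h
      have e2 := hS (h - 1)
      -- the arguments `(h+1)θ` and `hθ` add up to `2π`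
      rw [show (((h : ℤ) : ℝ) + 1) * (2 * (Real.pi / (2 * h + 1 : ℕ)))
          = 2 * Real.pi - (((h - 1 : ℤ) : ℝ) + 1) * (2 * (Real.pi / (2 * h + 1 : ℕ))) by
        push_cast at hm0 ⊢; field_simp; ring, Real.sin_two_pi_sub] at e1
      have : ((S ℝ (h : ℤ)).eval t + (S ℝ ((h : ℤ) - 1)).eval t)
          * Real.sin (2 * (Real.pi / (2 * h + 1 : ℕ))) = 0 := by
        rw [add_mul, e1, e2]; ring
      exact (mul_eq_zero.mp this).resolve_right hs
    rw [show ((2 * h + 1 : ℕ) - 2 : ℤ) / 2 = h - 1 by lia,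
      show ((2 * h + 1 : ℕ) - 1 : ℤ) / 2 = h by lia,
      show ((2 * h + 1 : ℕ) - 3 : ℤ) / 2 = h - 1 by lia,
      show ((2 * h + 1 : ℕ) : ℤ) / 2 = h by lia, h1]
    simp

lemma geomRefl_liftable (M : CoxeterMatrix I) : M.IsLiftable (geomRefl M) := by
  intro i j
  by_cases hij : i = j
  · subst hij
    rw [M.diagonal, pow_one]
    ext1 z
    exact involutive_reflection (coroot_self M i) z
  have h1 := M.off_diagonal i j hij
  ext1 z
  have ht : 2 * Real.cos (2 * (Real.pi / M i j)) =
      coroot M i (Finsupp.single j 1) * coroot M j (Finsupp.single i 1) - 2 := by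
    rw [coroot_single, coroot_single, M.symmetric j i, eval_param]
  have key := reflection_mul_reflection_pow_apply (coroot_self M i) (coroot_self M j)
    (M i j) z _ ht
  unfold geomRefl
  rw [key]
  obtain h0 | h2 | h3 : M i j = 0 ∨ M i j = 2 ∨ 3 ≤ M i j := by lia
  · simp [h0]
  · -- the two reflections commute: `t = -2`, and `S_n(-2)` is given by a separate formula
    have hc : Real.cos (2 * (Real.pi / (2 : ℕ))) = -1 := by
      rw [show 2 * (Real.pi / (2 : ℕ)) = Real.pi by push_cast; ring, Real.cos_pi]
    have e1 : coroot M j (Finsupp.single i 1) = 0 := by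
      rw [coroot_single, M.symmetric j i, h2]; simp
    have e2 : coroot M i (Finsupp.single j 1) = 0 := by
      rw [coroot_single, h2]; simp
    rw [h2, hc, e1, e2]
    norm_num
    abel
  · obtain ⟨hA, hB⟩ := chebyshev_vanish h3
    rw [hA, hB]
    simp

variable {W : Type*} [Group W] {M : CoxeterMatrix I} (cs : CoxeterSystem M W)

/-- The order of `s_i s_j` is not smaller than `m_{ij}`, as seen from its action on `e_i` in the
geometric representation. -/
lemma simple_mul_simple_pow_ne_one {i j : I} (hij : i ≠ j) {k : ℕ} (hk : 0 < k)
    (hkm : M i j = 0 ∨ k < M i j) : (cs.simple i * cs.simple j) ^ k ≠ 1 := by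
  intro hone
  have h1 := M.off_diagonal i j hij
  have hg : (geomRefl M i * geomRefl M j) ^ k = 1 := by
    have := congrArg (cs.lift ⟨_, geomRefl_liftable M⟩) hone
    simpa [cs.lift_apply_simple (geomRefl_liftable M)] using this
  have ht : 2 * Real.cos (2 * (Real.pi / M i j)) =
      coroot M i (Finsupp.single j 1) * coroot M j (Finsupp.single i 1) - 2 := by
    rw [coroot_single, coroot_single, M.symmetric j i, eval_param]
  have key := reflection_mul_reflection_pow_apply_self (coroot_self M i) (coroot_self M j)
    k _ ht
  have hg' : ((geomRefl M i * geomRefl M j) ^ k) (Finsupp.single i 1) = Finsupp.single i 1 := by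
    rw [hg]; rfl
  unfold geomRefl at hg'
  rw [key] at hg'
  have ci := DFunLike.congr_fun hg' i
  have cj := DFunLike.congr_fun hg' j
  simp [hij] at ci
  simp [hij.symm, coroot_single, M.symmetric j i] at cj
  obtain h0 | h2 | h3 : M i j = 0 ∨ M i j = 2 ∨ 3 ≤ M i j := by lia
  · simp [h0, S_eval_two] at cj
    lia
  · have hk1 : k = 1 := by lia
    subst hk1
    have hc : Real.cos (2 * (Real.pi / (2 : ℕ))) = -1 := by
      rw [show 2 * (Real.pi / (2 : ℕ)) = Real.pi by push_cast; ring, Real.cos_pi]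
    rw [h2, hc] at ci
    norm_num at ci
  · have hm' : (3 : ℝ) ≤ M i j := by exact_mod_cast h3
    have hcos : Real.cos (Real.pi / M i j) ≠ 0 := by
      apply ne_of_gt
      apply Real.cos_pos_of_mem_Ioo
      have : 0 < Real.pi / M i j := by positivity
      refine ⟨by linarith [Real.pi_pos], ?_⟩
      rw [div_lt_iff₀ (by linarith)]
      nlinarith [Real.pi_pos]
    have z1 := cj.resolve_right hcos
    rw [z1, add_zero] at ci
    have hs := (sin_two_pi_div_pos h3).ne'
    have s1 := S_two_mul_real_cos (2 * (Real.pi / M i j)) ((k : ℤ) - 1)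
    have s2 := S_two_mul_real_cos (2 * (Real.pi / M i j)) (k : ℤ)
    rw [z1, zero_mul] at s1
    rw [ci, one_mul] at s2
    push_cast at s1 s2
    rw [sub_add_cancel] at s1
    rw [add_mul, one_mul, Real.sin_add, ← s1, zero_mul, zero_add] at s2
    have hc1 : Real.cos (k * (2 * (Real.pi / M i j))) = 1 :=
      mul_right_cancel₀ hs (by rw [one_mul]; exact s2.symm)
    obtain ⟨n, hn⟩ := (Real.cos_eq_one_iff _).mp hc1
    have hm0 : (M i j : ℝ) ≠ 0 := by linarith
    have hp := Real.pi_ne_zero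
    field_simp at hn
    have hn' : n * (M i j : ℤ) = k := by exact_mod_cast hn
    have hdvd : M i j ∣ k := by
      have : (M i j : ℤ) ∣ (k : ℤ) := ⟨n, by rw [← hn']; ring⟩
      exact_mod_cast this
    have := Nat.le_of_dvd hk hdvd
    lia

end Order

section Exchange

variable {I : Type*} {W : Type*} [Group W] {M : CoxeterMatrix I}
  (cs : CoxeterSystem M W)

/-! ### The exchange property -/

open Classical in
/-- The action of a simple generator on `W × ℤ/2`: conjugation on the first factor, and the second
coordinate records whether the first one equals `s_i`. -/
def signAct (i : I) : Function.End (W × ZMod 2) := fun p =>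
  (cs.simple i * p.1 * cs.simple i, p.2 + if p.1 = cs.simple i then 1 else 0)

open Classical in
lemma signAct_pow (i j : I) (n : ℕ) (t : W) (e : ZMod 2) :
    ((signAct cs i * signAct cs j) ^ n) (t, e) =
      ((cs.simple i * cs.simple j) ^ n * t * (cs.simple j * cs.simple i) ^ n,
        e + ∑ p ∈ Finset.range (2 * n),
          if t = (cs.simple j * cs.simple i) ^ p * cs.simple j then 1 else 0) := by
  induction n with
  | zero => simp [show (1 : Function.End (W × ZMod 2)) (t, e) = (t, e) from rfl]
  | succ n ih =>
    rw [pow_succ']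
    change signAct cs i (signAct cs j (((signAct cs i * signAct cs j) ^ n) (t, e))) = _
    rw [ih]
    set a := cs.simple i with ha
    set b := cs.simple j with hb
    have haa : a * a = 1 := cs.simple_mul_simple_self i
    have hbb : b * b = 1 := cs.simple_mul_simple_self j
    have ha' : a⁻¹ = a := cs.inv_simple i
    have hb' : b⁻¹ = b := cs.inv_simple j
    have hinv : ((a * b) ^ n)⁻¹ = (b * a) ^ n := by rw [← inv_pow]; simp [ha', hb']
    have hinv' : ((b * a) ^ n)⁻¹ = (a * b) ^ n := by rw [← inv_pow]; simp [ha', hb']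
    have hcomm : b * (a * b) ^ n = (b * a) ^ n * b := by
      rw [mul_pow_mul]
    have c1 : (a * b) ^ n * t * (b * a) ^ n = b ↔ t = (b * a) ^ (2 * n) * b := by
      rw [mul_assoc, ← eq_inv_mul_iff_mul_eq, hinv, ← eq_mul_inv_iff_mul_eq, hinv', mul_assoc,
        hcomm, ← mul_assoc, ← pow_add, two_mul]
    have c2 : b * ((a * b) ^ n * t * (b * a) ^ n) * b = a ↔ t = (b * a) ^ (2 * n + 1) * b := by
      rw [← eq_mul_inv_iff_mul_eq, hb', ← eq_inv_mul_iff_mul_eq, hb', mul_assoc,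
        ← eq_inv_mul_iff_mul_eq, hinv, ← eq_mul_inv_iff_mul_eq, hinv',
        show (b * a) ^ n * (b * (a * b)) * (a * b) ^ n = (b * a) ^ n * (b * a) * (b * (a * b) ^ n) by
          simp only [mul_assoc], hcomm, ← mul_assoc, ← pow_succ, ← pow_add,
        show n + 1 + n = 2 * n + 1 by ring]
    simp only [signAct, ← ha, ← hb]
    refine Prod.ext ?_ ?_
    · simp only [pow_succ' (a * b), pow_succ (b * a), mul_assoc]
    · simp only [c1, c2]
      rw [show 2 * (n + 1) = 2 * n + 1 + 1 by ring, Finset.sum_range_succ, Finset.sum_range_succ]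
      ring

/-- In `(s_i s_j)^m` each reflection is met twice, hence the parities are well defined on `W`. -/
lemma signAct_liftable : M.IsLiftable (signAct cs) := by
  classical
  intro i j
  funext ⟨t, e⟩
  rw [signAct_pow]
  have h1 := cs.simple_mul_simple_pow i j
  have h2 := cs.simple_mul_simple_pow' i j
  rw [h1, h2, two_mul, Finset.sum_range_add]
  simp only [pow_add, h2, one_mul, mul_one]
  rw [CharTwo.add_self_eq_zero, add_zero]
  rfl

open Classical in
lemma prod_signAct (ω : List I) (t : W) (e : ZMod 2) :
    (ω.map (signAct cs)).prod (t, e) =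
      (cs.wordProd ω * t * (cs.wordProd ω)⁻¹, e + ((cs.rightInvSeq ω).count t : ZMod 2)) := by
  induction ω with
  | nil => simp [show (1 : Function.End (W × ZMod 2)) (t, e) = (t, e) from rfl]
  | cons i ω ih =>
    rw [List.map_cons, List.prod_cons]
    change signAct cs i ((ω.map (signAct cs)).prod (t, e)) = _
    rw [ih]
    have c : cs.wordProd ω * t * (cs.wordProd ω)⁻¹ = cs.simple i ↔
        (cs.wordProd ω)⁻¹ * cs.simple i * cs.wordProd ω = t := by
      constructor
      · intro h; rw [← h]; group
      · intro h; rw [← h]; group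
    refine Prod.ext ?_ ?_
    · simp [signAct, cs.wordProd_cons, mul_assoc]
    · simp only [signAct, c, CoxeterSystem.rightInvSeq, List.count_cons, beq_iff_eq]
      push_cast
      ring

open Classical in
/-- The parity of the number of occurrences of `t` in the inversion sequence of a word depends only
on the element of `W` that the word represents. -/
lemma count_rightInvSeq_congr {ω ω' : List I} (h : cs.wordProd ω = cs.wordProd ω') (t : W) :
    ((cs.rightInvSeq ω).count t : ZMod 2) = ((cs.rightInvSeq ω').count t : ZMod 2) := by
  have key (ω : List I) : ((cs.lift ⟨_, signAct_liftable cs⟩) (cs.wordProd ω))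
      = (ω.map (signAct cs)).prod := by
    rw [CoxeterSystem.wordProd, map_list_prod, List.map_map]
    congr 1
    apply List.map_congr_left
    intro i _
    exact cs.lift_apply_simple (signAct_liftable cs) i
  have := (key ω).symm.trans ((congrArg _ h).trans (key ω'))
  have := congrArg Prod.snd (congrFun this (t, 0))
  rw [prod_signAct, prod_signAct] at this
  simpa using this

lemma mem_rightInvSeq {ω : List I} {i : I} (h : cs.IsRightDescent (cs.wordProd ω) i) :
    cs.simple i ∈ cs.rightInvSeq ω := by
  classical
  obtain ⟨u, hu, hu'⟩ := cs.exists_isReduced (cs.wordProd ω * cs.simple i)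
  have hprod : cs.wordProd (u.concat i) = cs.wordProd ω := by
    rw [cs.wordProd_concat, ← hu']; simp
  have hred : cs.IsReduced (u.concat i) := by
    unfold CoxeterSystem.IsReduced
    rw [hprod, List.length_concat, ← hu.eq, ← hu']
    exact ((cs.isRightDescent_iff).mp h).symm
  have hmem : cs.simple i ∈ cs.rightInvSeq (u.concat i) := by
    rw [cs.rightInvSeq_concat]; simp
  have hcount := count_rightInvSeq_congr cs hprod (cs.simple i)
  rw [List.count_eq_one_of_mem hred.nodup_rightInvSeq hmem] at hcount
  by_contra hn
  rw [List.count_eq_zero_of_not_mem hn] at hcount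
  simp at hcount

/-- The exchange property: a left descent of `π ω` is one of the left inversions read off from any
word `ω`, so that multiplying by it deletes a letter. -/
lemma mem_leftInvSeq {ω : List I} {i : I} (h : cs.IsLeftDescent (cs.wordProd ω) i) :
    cs.simple i ∈ cs.leftInvSeq ω := by
  have h' : cs.IsRightDescent (cs.wordProd ω.reverse) i := by
    rw [cs.wordProd_reverse]
    exact (cs.isRightDescent_inv_iff).mpr h
  have := mem_rightInvSeq cs h'
  rw [cs.rightInvSeq_reverse] at this
  simpa using this

lemma exists_isReduced_cons {x : W} {i : I} (h : cs.IsLeftDescent x i) :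
    ∃ u : List I, cs.IsReduced (i :: u) ∧ cs.wordProd (i :: u) = x := by
  obtain ⟨u, hu, hu'⟩ := cs.exists_isReduced (cs.simple i * x)
  have hp : cs.wordProd (i :: u) = x := by rw [cs.wordProd_cons, ← hu']; simp
  refine ⟨u, ?_, hp⟩
  unfold CoxeterSystem.IsReduced
  rw [hp, List.length_cons, ← hu.eq, ← hu']
  exact ((cs.isLeftDescent_iff).mp h).symm

/-! ### Matsumoto's theorem -/

/-- The alternating word `[i, j, i, …]` of length `n` that starts with `i` (Mathlib's
`alternatingWord` prescribes the last letter instead). -/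
def alt (i j : I) : ℕ → List I
  | 0 => []
  | n + 1 => i :: alt j i n

lemma length_alt (i j : I) (n : ℕ) : (alt i j n).length = n := by
  induction n generalizing i j with
  | zero => rfl
  | succ n ih => simp [alt, ih]

lemma alt_eq (i j : I) (n : ℕ) : alt i j n =
    if Even n then CoxeterSystem.alternatingWord i j n
    else CoxeterSystem.alternatingWord j i n := by
  induction n generalizing i j with
  | zero => rfl
  | succ n ih =>
    rw [alt, ih]
    by_cases h : Even n
    · simp [h, Nat.even_add_one, CoxeterSystem.alternatingWord_succ']
    · simp [h, Nat.even_add_one, CoxeterSystem.alternatingWord_succ']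

lemma wordProd_alt (i j : I) :
    cs.wordProd (alt i j (M i j)) = cs.wordProd (alt j i (M i j)) := by
  have := cs.wordProd_braidWord_eq i j
  simp only [CoxeterSystem.braidWord, M.symmetric j i] at this
  rw [alt_eq, alt_eq]
  split_ifs
  · exact this
  · exact this.symm

lemma mem_leftInvSeq_alt {i j : I} {n : ℕ} {t : W} (h : t ∈ cs.leftInvSeq (alt i j n)) :
    ∃ p < n, t = (cs.simple i * cs.simple j) ^ p * cs.simple i := by
  induction n generalizing i j t with
  | zero => simp [alt] at h
  | succ n ih =>
    simp only [alt, CoxeterSystem.leftInvSeq, List.mem_cons, List.mem_map] at h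
    rcases h with rfl | ⟨t', ht', rfl⟩
    · exact ⟨0, by lia, by simp⟩
    · obtain ⟨p, hp, rfl⟩ := ih ht'
      refine ⟨p + 1, by lia, ?_⟩
      rw [MulAut.conj_apply, cs.inv_simple, pow_succ, ← mul_assoc, ← mul_pow_mul]
      simp only [mul_assoc]

/-- If `s_i` and `s_j` both shorten `x`, then `x` has a reduced word starting with any alternating
word in `i, j` of length at most `m_{ij}`. -/
lemma exists_alt_prefix {x : W} {k : ℕ} {i j : I} (hij : i ≠ j) (hi : cs.IsLeftDescent x i)
    (hj : cs.IsLeftDescent x j) (hk : M i j = 0 ∨ k ≤ M i j) :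
    ∃ v, cs.IsReduced (alt i j k ++ v) ∧ cs.wordProd (alt i j k ++ v) = x := by
  induction k generalizing i j with
  | zero =>
    obtain ⟨v, hv, hv'⟩ := cs.exists_isReduced x
    exact ⟨v, hv, hv'.symm⟩
  | succ k ih =>
    obtain ⟨v, hv, hx⟩ := ih hij.symm hj hi (by rw [M.symmetric j i]; lia)
    have hmem : cs.simple i ∈ cs.leftInvSeq (alt j i k ++ v) := mem_leftInvSeq cs (by rwa [hx])
    obtain ⟨p, hp, hpe⟩ := List.mem_iff_getElem.mp hmem
    rw [cs.length_leftInvSeq] at hp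
    by_cases hpk : p < k
    · -- a letter deleted from the alternating part would give `s_i s_j` too small an order
      exfalso
      have hmem' : cs.simple i ∈ cs.leftInvSeq (alt j i k) := by
        have e : alt j i k = (alt j i k ++ v).take k := by
          rw [List.take_left' (length_alt j i k)]
        rw [e, cs.leftInvSeq_take]
        rw [← hpe]
        refine List.mem_iff_getElem.mpr ⟨p, ?_, List.getElem_take⟩
        rw [List.length_take, cs.length_leftInvSeq]
        lia
      obtain ⟨q, hq, hqe⟩ := mem_leftInvSeq_alt cs hmem'
      refine simple_mul_simple_pow_ne_one cs hij.symm (k := q + 1) (by lia)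
        (by rw [M.symmetric j i]; lia) ?_
      rw [pow_succ, ← mul_assoc, ← hqe]
      simp
    · refine ⟨v.eraseIdx (p - k), ?_⟩
      have herase : alt i j (k + 1) ++ v.eraseIdx (p - k)
          = i :: (alt j i k ++ v).eraseIdx p := by
        rw [List.eraseIdx_append_of_length_le (by rw [length_alt]; lia), length_alt]
        rfl
      have hprod : cs.wordProd (i :: (alt j i k ++ v).eraseIdx p) = x := by
        rw [cs.wordProd_cons, ← cs.getD_leftInvSeq_mul_wordProd, hx,
          List.getD_eq_getElem _ _ (by rw [cs.length_leftInvSeq]; exact hp), hpe]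
        simp
      rw [herase]
      refine ⟨?_, hprod⟩
      unfold CoxeterSystem.IsReduced
      rw [hprod, ← hx, hv.eq, List.length_cons, List.length_eraseIdx_of_lt hp]
      lia

/-- A pair of distinct left descents generates a finite dihedral group, and both braid words occur
as prefixes of reduced words with a common tail. -/
lemma exists_braid_prefix {x : W} {i j : I} (hij : i ≠ j) (hi : cs.IsLeftDescent x i)
    (hj : cs.IsLeftDescent x j) :
    M i j ≠ 0 ∧ ∃ v, cs.IsReduced (alt i j (M i j) ++ v) ∧
      cs.wordProd (alt i j (M i j) ++ v) = x ∧ cs.IsReduced (alt j i (M i j) ++ v) ∧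
      cs.wordProd (alt j i (M i j) ++ v) = x := by
  constructor
  · intro h0
    obtain ⟨v, hv, hx⟩ := exists_alt_prefix cs (k := cs.length x + 1) hij hi hj (Or.inl h0)
    have := hv.eq
    rw [hx, List.length_append, length_alt] at this
    lia
  · obtain ⟨v, hv, hx⟩ := exists_alt_prefix cs (k := M i j) hij hi hj (Or.inr le_rfl)
    have hx' : cs.wordProd (alt j i (M i j) ++ v) = x := by
      rw [cs.wordProd_append, ← wordProd_alt, ← cs.wordProd_append, hx]
    refine ⟨v, hv, hx, ?_, hx'⟩
    unfold CoxeterSystem.IsReduced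
    rw [hx', ← hx, hv.eq]
    simp [length_alt]

lemma isReduced_tail {i : I} {u : List I} (h : cs.IsReduced (i :: u)) : cs.IsReduced u := by
  simpa using h.drop 1

lemma isLeftDescent_head {i : I} {u : List I} (h : cs.IsReduced (i :: u)) :
    cs.IsLeftDescent (cs.wordProd (i :: u)) i := by
  unfold CoxeterSystem.IsLeftDescent
  rw [h.eq, cs.wordProd_cons, cs.simple_mul_simple_cancel_left, (isReduced_tail cs h).eq]
  simp

/-- Matsumoto's theorem: a reflexive and transitive relation on words that is stable under adding
a letter on the left and contains the braid moves at the beginning of a word relates any two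
reduced words of the same element. -/
theorem matsumoto (R : List I → List I → Prop) (hrefl : ∀ ω, R ω ω)
    (htrans : ∀ ω₁ ω₂ ω₃, R ω₁ ω₂ → R ω₂ ω₃ → R ω₁ ω₃)
    (hcons : ∀ i ω ω', R ω ω' → R (i :: ω) (i :: ω'))
    (hbraid : ∀ i j v, i ≠ j → M i j ≠ 0 → R (alt i j (M i j) ++ v) (alt j i (M i j) ++ v))
    {ω ω' : List I} (hω : cs.IsReduced ω) (hω' : cs.IsReduced ω')
    (h : cs.wordProd ω = cs.wordProd ω') : R ω ω' := by
  induction hn : ω.length generalizing ω ω' with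
  | zero =>
    have h' : ω'.length = 0 := by rw [← hω'.eq, ← h, hω.eq, hn]
    rw [List.length_eq_zero_iff.mp hn, List.length_eq_zero_iff.mp h']
    exact hrefl _
  | succ n ih =>
    have hlen : ω'.length = n + 1 := by rw [← hω'.eq, ← h, hω.eq, hn]
    obtain ⟨i, u, rfl⟩ := List.exists_cons_of_length_eq_add_one hn
    obtain ⟨j, u', rfl⟩ := List.exists_cons_of_length_eq_add_one hlen
    -- reduced words with the same first letter are handled by induction
    have same {i : I} {p q : List I} (hp : cs.IsReduced (i :: p)) (hq : cs.IsReduced (i :: q))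
        (hpq : cs.wordProd (i :: p) = cs.wordProd (i :: q)) (hl : (i :: p).length = n + 1) :
        R (i :: p) (i :: q) := by
      refine hcons _ _ _ (ih (isReduced_tail cs hp) (isReduced_tail cs hq) ?_ (by simpa using hl))
      simpa [cs.wordProd_cons] using hpq
    by_cases hij : i = j
    · subst hij
      exact same hω hω' h hn
    · have hi := isLeftDescent_head cs hω
      have hj : cs.IsLeftDescent (cs.wordProd (i :: u)) j := by
        rw [h]; exact isLeftDescent_head cs hω'
      obtain ⟨h0, v, r1, p1, r2, p2⟩ := exists_braid_prefix cs hij hi hj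
      have hb := hbraid i j v hij h0
      obtain ⟨m, hm⟩ := Nat.exists_eq_succ_of_ne_zero h0
      rw [hm] at r1 p1 r2 p2 hb
      have l2 : (alt j i m.succ ++ v).length = n + 1 := by
        rw [← r2.eq, p2, hω.eq, hn]
      exact htrans _ _ _ (same hω r1 p1.symm hn)
        (htrans _ _ _ hb (same r2 hω' (p2.trans h) l2))

end Exchange

section Filtration

/-! ### The degree filtration -/

variable {I : Type*} (M : CoxeterMatrix I)

lemma mk_eq_zero {x : FreeAlgebra ℂ (Gens I)} (h : Rel M x 0) : mk M x = 0 := by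
  rw [mk, RingQuot.mkAlgHom_rel ℂ h, map_zero]

variable {M} {W : Type*} [Group W] (cs : CoxeterSystem M W)

lemma exists_mem_filtration (z : A0 M) : ∃ n, z ∈ filtration M n := by
  have mono {m n : ℕ} (h : m ≤ n) : filtration M m ≤ filtration M n := by
    refine Submodule.span_mono ?_
    rintro _ ⟨l, hl, rfl⟩
    exact ⟨l, hl.trans h, rfl⟩
  obtain ⟨x, rfl⟩ := RingQuot.mkAlgHom_surjective ℂ (Rel M) z
  change ∃ n, mk M x ∈ filtration M n
  induction x using FreeAlgebra.induction with
  | grade0 r =>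
    refine ⟨0, ?_⟩
    rw [AlgHom.commutes, Algebra.algebraMap_eq_smul_one]
    exact Submodule.smul_mem _ _ (Submodule.subset_span ⟨[], by simp, by simp⟩)
  | grade1 g => exact ⟨1, Submodule.subset_span ⟨[g], by simp, by simp⟩⟩
  | mul x y hx hy =>
    obtain ⟨m, hm⟩ := hx
    obtain ⟨n, hn⟩ := hy
    refine ⟨m + n, ?_⟩
    have h := Submodule.mul_mem_mul hm hn
    rw [filtration, filtration, Submodule.span_mul_span] at h
    rw [map_mul]
    refine Submodule.span_mono ?_ h
    rintro _ ⟨_, ⟨l, hl, rfl⟩, _, ⟨l', hl', rfl⟩, rfl⟩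
    exact ⟨l ++ l', by rw [List.length_append]; lia, by simp⟩
  | add x y hx hy =>
    obtain ⟨m, hm⟩ := hx
    obtain ⟨n, hn⟩ := hy
    refine ⟨max m n, ?_⟩
    rw [map_add]
    exact Submodule.add_mem _ (mono (le_max_left _ _) hm) (mono (le_max_right _ _) hn)

lemma finite_length_le [Finite I] (n : ℕ) (P : W → Prop) :
    Finite {x : W // cs.length x ≤ n ∧ P x} := by
  have : Finite {l : List I // l.length ≤ n} := (List.finite_length_le I n).to_subtype
  choose u hu hu' using cs.exists_isReduced
  refine Finite.of_injective
    (fun x : {x : W // cs.length x ≤ n ∧ P x} =>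
      (⟨u x, by rw [← (hu x).eq, ← hu' x]; exact x.2.1⟩ : {l : List I // l.length ≤ n})) ?_
  intro x y hxy
  have : u x = u y := congrArg Subtype.val hxy
  exact Subtype.ext (by rw [hu' x, hu' y, this])

end Filtration

section Algebra

variable {I : Type*} [DecidableEq I] (M : CoxeterMatrix I)

/-! ### Words in the algebra -/

/-- The image of `α_{ij}` in `𝒜_{0+}`, extended by `α_{ii} = 0`. -/
def a (i j : I) : A0 M := if h : i ≠ j then mk M (agen i j h) else 0

lemma bProd_nil (k : I) : bProd M k [] = 1 := rfl

lemma bProd_cons (k i : I) (ω : List I) : bProd M k (i :: ω) = a M k i * bProd M i ω := rfl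

lemma a_self (i : I) : a M i i = 0 := by simp [a]

lemma a_symm (i j : I) : a M j i = -a M i j := by
  by_cases h : i = j
  · subst h; simp [a_self]
  · have := mk_eq_zero M (Rel.anti i j h)
    rw [map_add] at this
    simp only [a, ne_eq, h, Ne.symm h, not_false_eq_true, dite_true]
    exact (neg_eq_of_add_eq_zero_right this).symm

lemma a_add (i j k : I) : a M i j + a M j k = a M i k := by
  by_cases hij : i = j
  · subst hij; simp [a_self]
  by_cases hjk : j = k
  · subst hjk; simp [a_self]
  by_cases hki : k = i
  · subst hki; rw [a_symm, a_self]; simp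
  · have := mk_eq_zero M (Rel.triangle i j k hij hjk hki)
    rw [map_add, map_add] at this
    rw [a_symm M k i]
    simp only [a, ne_eq, hij, hjk, hki, not_false_eq_true, dite_true]
    exact eq_neg_of_add_eq_zero_left this

lemma a_pow {i j : I} (h : i ≠ j) (hm : M i j ≠ 0) : a M i j ^ M i j = 0 := by
  have := mk_eq_zero M (Rel.nil i j h hm)
  rw [map_pow] at this
  simpa only [a, ne_eq, h, not_false_eq_true, dite_true] using this

/-- An alternating word contributes a power of `α_{ij}` up to a sign depending on its length
only. -/
lemma exists_bProd_alt (n : ℕ) : ∃ ε : ℂ, ∀ (i j : I) (v : List I),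
    bProd M i (alt j i n ++ v) = ε • (a M i j ^ n * bProd M (if Even n then i else j) v) := by
  induction n with
  | zero => exact ⟨1, fun i j v => by simp [alt]⟩
  | succ n ih =>
    obtain ⟨ε, h⟩ := ih
    refine ⟨ε * (-1) ^ n, fun i j v => ?_⟩
    rw [alt, List.cons_append, bProd_cons, h j i, a_symm M i j, ← neg_one_smul ℂ, smul_pow, pow_succ']
    have e : (if Even n then j else i) = if Even (n + 1) then i else j := by
      by_cases hn : Even n <;> simp [hn, Nat.even_add_one]
    rw [e]
    simp only [mul_smul_comm, smul_mul_assoc, smul_smul, mul_assoc]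

/-- A power of `α_{ij}` that is killed by one more factor `α_{ij}` does not distinguish the
indices `i` and `j` on its right. -/
lemma pow_mul_bProd {i j : I} {n : ℕ} (h0 : a M i j ^ (n + 1) = 0) (v : List I) :
    a M i j ^ n * bProd M i v = a M i j ^ n * bProd M j v := by
  cases v with
  | nil => rfl
  | cons l v =>
    rw [bProd_cons, bProd_cons, ← a_add M i j l, add_mul, mul_add, ← mul_assoc, ← pow_succ, h0]
    simp

/-- Braid moves change `b` by a scalar that does not depend on the starting index. -/
lemma exists_bProd_braid {i j : I} (hij : i ≠ j) (hm : M i j ≠ 0) (v : List I) :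
    ∃ c : ℂ, ∀ k, bProd M k (alt i j (M i j) ++ v) = c • bProd M k (alt j i (M i j) ++ v) := by
  have h0 := a_pow M hij hm
  obtain ⟨n, hn⟩ := Nat.exists_eq_succ_of_ne_zero hm
  rw [hn] at h0 ⊢
  obtain ⟨ε, hε⟩ := exists_bProd_alt M n
  refine ⟨(-1) ^ n, fun k => ?_⟩
  have hr : a M i j ^ n * bProd M (if Even n then i else j) v
      = a M i j ^ n * bProd M (if Even n then j else i) v := by
    split_ifs
    · exact pow_mul_bProd M h0 v
    · exact (pow_mul_bProd M h0 v).symm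
  have hl : a M k i * a M i j ^ n = a M k j * a M i j ^ n := by
    rw [← a_add M k i j, add_mul, ← pow_succ', h0, add_zero]
  have hs : a M j i ^ n = ((-1 : ℂ) ^ n) • a M i j ^ n := by
    rw [a_symm M i j, ← neg_one_smul ℂ, smul_pow]
  rw [alt, alt, List.cons_append, List.cons_append, bProd_cons, bProd_cons, hε i j, hε j i, hr, hs]
  simp only [mul_smul_comm, smul_mul_assoc, ← mul_assoc, hl]
  rw [smul_smul, smul_smul, mul_right_comm, ← mul_pow]
  simp

/-- The relation between words to which Matsumoto's theorem is applied. -/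
def WordRel (ω ω' : List I) : Prop := ∃ c : ℂ, ∀ k, bProd M k ω = c • bProd M k ω'

variable {M} {W : Type*} [Group W] (cs : CoxeterSystem M W)

lemma wordRel_of_isReduced {ω ω' : List I} (hω : cs.IsReduced ω) (hω' : cs.IsReduced ω')
    (h : cs.wordProd ω = cs.wordProd ω') : WordRel M ω ω' := by
  refine matsumoto cs (WordRel M) (fun ω => ⟨1, fun k => by simp⟩) ?_ ?_ ?_ hω hω' h
  · rintro ω₁ ω₂ ω₃ ⟨c, hc⟩ ⟨d, hd⟩
    exact ⟨c * d, fun k => by rw [hc, hd, smul_smul]⟩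
  · rintro i ω ω' ⟨c, hc⟩
    exact ⟨c, fun k => by rw [bProd_cons, bProd_cons, hc, mul_smul_comm]⟩
  · intro i j v hij hm
    exact exists_bProd_braid M hij hm v

/-- If `s_i` shortens `π u`, a reduced word for `π u` may be chosen to start with `i`, so that the
factor `α_{ii} = 0` appears. -/
lemma bProd_eq_zero_of_descent {i : I} {u : List I} (hu : cs.IsReduced u)
    (h : cs.IsLeftDescent (cs.wordProd u) i) : bProd M i u = 0 := by
  obtain ⟨v, hv, hv'⟩ := exists_isReduced_cons cs h
  obtain ⟨c, hc⟩ := wordRel_of_isReduced cs hu hv hv'.symm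
  rw [hc, bProd_cons, a_self, zero_mul, smul_zero]

lemma bProd_eq_zero_of_not_isReduced {ω : List I} (h : ¬ cs.IsReduced ω) (k : I) :
    bProd M k ω = 0 := by
  induction ω generalizing k with
  | nil => exact absurd (by simp [CoxeterSystem.IsReduced]) h
  | cons i u ih =>
    rw [bProd_cons]
    by_cases hu : cs.IsReduced u
    · have hd : cs.IsLeftDescent (cs.wordProd u) i := by
        by_contra hd
        rw [cs.not_isLeftDescent_iff, hu.eq, ← cs.wordProd_cons] at hd
        exact h hd
      rw [bProd_eq_zero_of_descent cs hu hd, mul_zero]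
    · rw [ih hu, mul_zero]

/-! ### Spanning -/

/-- A product of generators `α_{ij} P` is a difference `α_{kj} P - α_{ki} P`, and so is a
combination of chains starting at any given index `k`. -/
lemma prod_mem_span_bProd (l : List (Gens I)) (k : I) :
    (l.map fun g => mk M (FreeAlgebra.ι ℂ g)).prod ∈
      Submodule.span ℂ {z : A0 M | ∃ ω : List I, ω.length = l.length ∧ z = bProd M k ω} := by
  induction l generalizing k with
  | nil => exact Submodule.subset_span ⟨[], rfl, rfl⟩
  | cons g l ih =>
    obtain ⟨⟨i, j⟩, hij⟩ := g
    have hg : mk M (FreeAlgebra.ι ℂ (⟨(i, j), hij⟩ : Gens I)) = a M k j - a M k i := by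
      rw [← a_add M k i j, add_sub_cancel_left]
      have hij' : i ≠ j := hij
      simp only [a, dif_pos hij', agen]
    have step (p : I) : a M k p * (l.map fun g => mk M (FreeAlgebra.ι ℂ g)).prod ∈
        Submodule.span ℂ {z : A0 M | ∃ ω : List I, ω.length = l.length + 1 ∧
          z = bProd M k ω} := by
      have := Submodule.mem_map_of_mem (f := LinearMap.mulLeft ℂ (a M k p)) (ih p)
      rw [Submodule.map_span] at this
      refine Submodule.span_mono ?_ this
      rintro _ ⟨_, ⟨ω, hω, rfl⟩, rfl⟩
      exact ⟨p :: ω, by simp [hω], rfl⟩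
    rw [List.map_cons, List.prod_cons, hg, sub_mul, List.length_cons]
    exact Submodule.sub_mem _ (step j) (step i)

/-- The piece of degree at most `n` is spanned by the `b_x` with `ℓ(x) ≤ n`. -/
lemma filtration_le (o : I) (w : W → List I)
    (hw : ∀ x : W, cs.wordProd (w x) = x ∧ cs.IsReduced (w x)) (n : ℕ) :
    filtration M n ≤ Submodule.span ℂ (Set.range
      fun x : {x : W // cs.length x ≤ n ∧ cs.length x < cs.length (cs.simple o * x)} =>
        bProd M o (w x)) := by
  refine Submodule.span_le.mpr ?_
  rintro _ ⟨l, hl, rfl⟩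
  refine (Submodule.span_le.mpr ?_) (prod_mem_span_bProd l o)
  rintro _ ⟨ω, hω, rfl⟩
  by_cases hr : cs.IsReduced ω
  · by_cases hd : cs.IsLeftDescent (cs.wordProd ω) o
    · rw [bProd_eq_zero_of_descent cs hr hd]
      exact Submodule.zero_mem _
    · obtain ⟨c, hc⟩ := wordRel_of_isReduced cs hr (hw (cs.wordProd ω)).2 (hw _).1.symm
      rw [hc]
      refine Submodule.smul_mem _ _ (Submodule.subset_span ⟨⟨cs.wordProd ω, ?_, ?_⟩, rfl⟩)
      · rw [hr.eq]; lia
      · rw [(cs.not_isLeftDescent_iff).mp hd]; lia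
  · rw [bProd_eq_zero_of_not_isReduced cs hr]
    exact Submodule.zero_mem _

end Algebra

end EvenAdd

open EvenAdd in
/-- Proposition 7.2 of Etingof–Rains. -/
theorem proposition_7_2 {I : Type*} [Fintype I] [DecidableEq I]
    {W : Type*} [Group W] (M : CoxeterMatrix I) (cs : CoxeterSystem M W)
    (o : I) (w : W → List I)
    (hw : ∀ x : W, cs.wordProd (w x) = x ∧ cs.IsReduced (w x)) :
    Submodule.span ℂ
        (Set.range fun x : {x : W // cs.length x < cs.length (cs.simple o * x)} =>
          bProd M o (w x)) = ⊤ ∧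
      ∀ n : ℕ, Module.finrank ℂ (filtration M n) ≤
        Nat.card {x : W // cs.length x ≤ n ∧ cs.length x < cs.length (cs.simple o * x)} := by
  constructor
  · rw [eq_top_iff]
    intro z _
    obtain ⟨n, hn⟩ := exists_mem_filtration z
    refine Submodule.span_mono ?_ (filtration_le cs o w hw n hn)
    rintro _ ⟨x, rfl⟩
    exact ⟨⟨x.1, x.2.2⟩, rfl⟩
  · intro n
    have hfin := finite_length_le cs n (fun x => cs.length x < cs.length (cs.simple o * x))
    have := Fintype.ofFinite
      {x : W // cs.length x ≤ n ∧ cs.length x < cs.length (cs.simple o * x)}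
    have hfd := FiniteDimensional.span_of_finite ℂ (Set.finite_range
      fun x : {x : W // cs.length x ≤ n ∧ cs.length x < cs.length (cs.simple o * x)} =>
        bProd M o (w x))
    refine (Submodule.finrank_mono (filtration_le cs o w hw n)).trans ?_
    rw [Nat.card_eq_fintype_card]
    exact finrank_range_le_card _
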